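/- Let m be a positive integer, τ ∈ ℍ and z ∈ ℂ with 0 < Im(z) < Im(τ), and write q = e^{2πiτ}, y = e^{2πiz}. Then A_{1,m}(τ,z) = −∑_{s≥0} ∑'_{ℓ≥0} q^{ms²+ℓs}·y^{2ms+ℓ} + ∑_{s≤−1} ∑'_{ℓ≤0} q^{ms²+ℓs}·y^{2ms+ℓ}, and A_{2,m}(τ,z) = ∑_{s≥0} ∑_{ℓ≥0} ℓ·q^{ms²+ℓs}·y^{2ms+ℓ} − ∑_{s≤−1} ∑_{ℓ≤0} ℓ·q^{ms²+ℓs}·y^{2ms+ℓ}, where ∑' means that the term with ℓ = 0 is counted with coefficient 1/2, and all the series occurring converge absolutely. -/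

import Mathlib

noncomputable section

open Complex Filter Topology
open scoped Classical

/-- `ee x = e^{2πix}`. -/
def ee (x : ℂ) : ℂ := Complex.exp (2 * (Real.pi : ℂ) * Complex.I * x)

/-- The Appell–Lerch sum `A_{1,m}(τ,z) = -(1/2)·∑_{s∈ℤ} q^{ms²}y^{2ms}(1+q^s y)/(1−q^s y)`. -/
def appell₁ (m : ℕ) (τ z : ℂ) : ℂ :=
  -(1 / 2) * ∑' s : ℤ, ee ((m : ℂ) * (s : ℂ) ^ 2 * τ + 2 * (m : ℂ) * (s : ℂ) * z) *
      (1 + ee ((s : ℂ) * τ + z)) / (1 - ee ((s : ℂ) * τ + z))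

/-- The Appell–Lerch sum `A_{2,m}(τ,z) = ∑_{s∈ℤ} q^{ms²+s}y^{2ms+1}/(1−q^s y)²`. -/
def appell₂ (m : ℕ) (τ z : ℂ) : ℂ :=
  ∑' s : ℤ, ee (((m : ℂ) * (s : ℂ) ^ 2 + (s : ℂ)) * τ + (2 * (m : ℂ) * (s : ℂ) + 1) * z) /
      (1 - ee ((s : ℂ) * τ + z)) ^ 2

/-- The monomial `q^{ms²+ℓs}·y^{2ms+ℓ}`. -/
def mon (m : ℕ) (τ z : ℂ) (s l : ℤ) : ℂ :=
  ee (((m : ℂ) * (s : ℂ) ^ 2 + (l : ℂ) * (s : ℂ)) * τ + (2 * (m : ℂ) * (s : ℂ) + (l : ℂ)) * z)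

/-!
Write `W = q^s y`, so that `q^{ms²+ℓs} y^{2ms+ℓ} = (q^{ms²} y^{2ms}) W^ℓ` is a theta term times a
power of `W`. For `s ≥ 0` we have `|W| ≤ |y| < 1`, so `(1 + W) / (2 (1 - W))` and `W / (1 - W)²`
expand geometrically in `W`, uniformly in `s`, and absolute convergence follows from that of the
theta series. The substitution `(s, ℓ, z) ↦ (-s - 1, -ℓ, τ - z)` multiplies the monomials by a
constant and replaces `W` by `W⁻¹`; it carries the terms with `s ≤ -1` to those with `s ≥ 0`, and
the two rational functions are respectively odd and even under `W ↦ W⁻¹`.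
-/

section PowerSeries

variable {ι 𝕜 : Type*} [NormedField 𝕜] {a w : ι → 𝕜} {c : ℕ → 𝕜} {r : 𝕜}

theorem summable_norm_coeff_mul_pow (ha : Summable fun i => ‖a i‖) (hw : ∀ i, ‖w i‖ ≤ ‖r‖)
    (hc : Summable fun l => ‖c l * r ^ l‖) :
    Summable fun p : ι × ℕ => ‖c p.2 * (a p.1 * w p.1 ^ p.2)‖ := by
  refine .of_nonneg_of_le (fun _ => norm_nonneg _) (fun ⟨i, l⟩ => ?_)
    (ha.mul_of_nonneg hc (fun _ => norm_nonneg _) (fun _ => norm_nonneg _))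
  calc ‖c l * (a i * w i ^ l)‖ = ‖a i‖ * (‖c l‖ * ‖w i‖ ^ l) := by
        simp only [norm_mul, norm_pow]; ring
    _ ≤ ‖a i‖ * (‖c l‖ * ‖r‖ ^ l) := by gcongr; exact hw i
    _ = ‖a i‖ * ‖c l * r ^ l‖ := by rw [norm_mul, norm_pow]

theorem hasSum_mul_powerSeries [CompleteSpace 𝕜] {g : ι → 𝕜} (ha : Summable fun i => ‖a i‖)
    (hw : ∀ i, ‖w i‖ ≤ ‖r‖) (hc : Summable fun l => ‖c l * r ^ l‖)
    (hg : ∀ i, HasSum (fun l => c l * w i ^ l) (g i)) :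
    HasSum (fun i => a i * g i) (∑' p : ι × ℕ, c p.2 * (a p.1 * w p.1 ^ p.2)) := by
  refine (summable_norm_coeff_mul_pow ha hw hc).of_norm.hasSum.prod_fiberwise fun i => ?_
  simpa only [mul_left_comm] using (hg i).mul_left (a i)

end PowerSeries

section RationalFunctions

theorem hasSum_geometric_half_zeroth_term {𝕜 : Type*} [NormedField 𝕜] [CharZero 𝕜] {w : 𝕜}
    (hw : ‖w‖ < 1) :
    HasSum (fun l : ℕ => (if l = 0 then (1 / 2 : 𝕜) else 1) * w ^ l)
      ((1 + w) / (2 * (1 - w))) := by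
  have hw1 : 1 - w ≠ 0 := sub_ne_zero.2 fun h => by simp [← h] at hw
  have hval : (1 + w) / (2 * (1 - w)) = (1 - w)⁻¹ - 1 / 2 := by
    field_simp
    ring
  rw [hval]
  refine ((hasSum_geometric_of_norm_lt_one hw).sub (hasSum_ite_eq 0 (1 / 2))).congr_fun fun l => ?_
  split_ifs with hl
  · norm_num [hl]
  · ring

variable {K : Type*} [Field K] {w : K}

theorem one_add_inv_div_two_mul_one_sub_inv (hw : w ≠ 0) :
    (1 + w⁻¹) / (2 * (1 - w⁻¹)) = -((1 + w) / (2 * (1 - w))) := by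
  rw [← mul_div_mul_right _ _ hw, ← div_neg]
  congr 1 <;> field_simp <;> ring

theorem inv_div_one_sub_inv_sq (hw : w ≠ 0) :
    w⁻¹ / (1 - w⁻¹) ^ 2 = w / (1 - w) ^ 2 := by
  rw [← mul_div_mul_right _ _ (pow_ne_zero 2 hw)]
  congr 1 <;> field_simp
  ring

end RationalFunctions

section Monomials

theorem ee_add (x x' : ℂ) : ee (x + x') = ee x * ee x' := by
  simp only [ee, mul_add, Complex.exp_add]

theorem ee_neg (x : ℂ) : ee (-x) = (ee x)⁻¹ := by
  simp only [ee, mul_neg, Complex.exp_neg]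

theorem ee_natCast_mul (n : ℕ) (x : ℂ) : ee (n * x) = ee x ^ n := by
  simp only [ee, ← Complex.exp_nat_mul, mul_left_comm]

theorem ee_ne_zero (x : ℂ) : ee x ≠ 0 := Complex.exp_ne_zero _

theorem norm_ee (x : ℂ) : ‖ee x‖ = Real.exp (-(2 * Real.pi * x.im)) := by
  simp [ee, Complex.norm_exp]

theorem norm_ee_lt_one {x : ℂ} (hx : 0 < x.im) : ‖ee x‖ < 1 := by
  rw [norm_ee, Real.exp_lt_one_iff, neg_lt_zero]
  positivity

theorem norm_ee_natCast_mul_add_le {τ : ℂ} (hτ : 0 < τ.im) (n : ℕ) (z : ℂ) :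
    ‖ee (n * τ + z)‖ ≤ ‖ee z‖ := by
  rw [ee_add, ee_natCast_mul, norm_mul, norm_pow]
  exact mul_le_of_le_one_left (norm_nonneg _)
    (pow_le_one₀ (norm_nonneg _) (norm_ee_lt_one hτ).le)

theorem mon_zero (m : ℕ) (τ z : ℂ) (s : ℤ) :
    mon m τ z s 0 = ee ((m : ℂ) * (s : ℂ) ^ 2 * τ + 2 * (m : ℂ) * (s : ℂ) * z) := by
  simp [mon]

theorem mon_natCast (m : ℕ) (τ z : ℂ) (s : ℤ) (l : ℕ) :
    mon m τ z s l = mon m τ z s 0 * ee (s * τ + z) ^ l := by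
  rw [mon_zero, ← ee_natCast_mul, ← ee_add, mon]
  push_cast
  ring_nf

theorem mon_one (m : ℕ) (τ z : ℂ) (s : ℤ) :
    mon m τ z s 1 = mon m τ z s 0 * ee (s * τ + z) := by
  simpa using mon_natCast m τ z s 1

theorem mon_reflect (m : ℕ) (τ z : ℂ) (s l : ℤ) :
    mon m τ z (-s - 1) (-l) = ee (m * (τ - 2 * z)) * mon m τ (τ - z) s l := by
  rw [mon, mon, ← ee_add]
  push_cast
  ring_nf

theorem ee_reflect (τ z : ℂ) (s : ℤ) :
    ee ((-s - 1 : ℤ) * τ + z) = (ee (s * τ + (τ - z)))⁻¹ := by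
  rw [← ee_neg]
  push_cast
  ring_nf

theorem mon_zero_eq_jacobiTheta₂_term (m : ℕ) (τ z : ℂ) (s : ℤ) :
    mon m τ z s 0 = jacobiTheta₂_term s (2 * m * z) (2 * m * τ) := by
  rw [mon_zero, ee, jacobiTheta₂_term]
  ring_nf

theorem summable_norm_mon_zero {m : ℕ} (hm : 0 < m) {τ : ℂ} (hτ : 0 < τ.im) (z : ℂ) :
    Summable fun s : ℤ => ‖mon m τ z s 0‖ := by
  have him : 0 < (2 * m * τ).im := by
    simp [mul_assoc, hm, hτ]
  simpa only [mon_zero_eq_jacobiTheta₂_term] using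
    ((summable_jacobiTheta₂_term_iff (2 * m * z) (2 * m * τ)).2 him).norm

end Monomials

section Expansion

variable {m : ℕ} {τ z : ℂ} {c : ℕ → ℂ} {g : ℂ → ℂ} {ε : ℂ}

theorem summable_norm_coeff_mul_mon (hm : 0 < m) (hτ : 0 < τ.im)
    (hc : Summable fun l => ‖c l * ee z ^ l‖) :
    Summable fun p : ℕ × ℕ => ‖c p.2 * mon m τ z (p.1 : ℤ) (p.2 : ℤ)‖ := by
  simpa only [mon_natCast, Int.cast_natCast] using summable_norm_coeff_mul_pow
    ((summable_norm_mon_zero hm hτ z).comp_injective Nat.cast_injective)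
    (fun n => norm_ee_natCast_mul_add_le hτ n z) hc

theorem summable_norm_coeff_mul_mon_neg (hm : 0 < m) (hτ : 0 < τ.im)
    (hc : Summable fun l => ‖c l * ee (τ - z) ^ l‖) :
    Summable fun p : ℕ × ℕ => ‖c p.2 * mon m τ z (-(p.1 : ℤ) - 1) (-(p.2 : ℤ))‖ := by
  simpa only [mon_reflect, mul_left_comm (c _), norm_mul (ee _)] using
    (summable_norm_coeff_mul_mon hm hτ hc).mul_left ‖ee (m * (τ - 2 * z))‖

theorem hasSum_nat_mon_zero_mul (hm : 0 < m) (hτ : 0 < τ.im) (hz : 0 < z.im)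
    (hg : ∀ w : ℂ, ‖w‖ < 1 → HasSum (fun l => c l * w ^ l) (g w)) :
    HasSum (fun n : ℕ => mon m τ z n 0 * g (ee (n * τ + z)))
      (∑' p : ℕ × ℕ, c p.2 * mon m τ z (p.1 : ℤ) (p.2 : ℤ)) := by
  have hy : ‖ee z‖ < 1 := norm_ee_lt_one hz
  have hW (n : ℕ) : ‖ee (n * τ + z)‖ ≤ ‖ee z‖ := norm_ee_natCast_mul_add_le hτ n z
  simpa only [mon_natCast, Int.cast_natCast] using hasSum_mul_powerSeries
    ((summable_norm_mon_zero hm hτ z).comp_injective Nat.cast_injective) hW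
    (hg _ hy).summable.norm fun n => hg _ ((hW n).trans_lt hy)

theorem hasSum_int_mon_zero_mul (hm : 0 < m) (hz : 0 < z.im) (hzτ : z.im < τ.im)
    (hg : ∀ w : ℂ, ‖w‖ < 1 → HasSum (fun l => c l * w ^ l) (g w))
    (hg_inv : ∀ w : ℂ, w ≠ 0 → g w⁻¹ = ε * g w) :
    HasSum (fun s : ℤ => mon m τ z s 0 * g (ee (s * τ + z)))
      ((∑' p : ℕ × ℕ, c p.2 * mon m τ z (p.1 : ℤ) (p.2 : ℤ)) +
        ε * ∑' p : ℕ × ℕ, c p.2 * mon m τ z (-(p.1 : ℤ) - 1) (-(p.2 : ℤ))) := by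
  have hτ : 0 < τ.im := hz.trans hzτ
  have hz' : 0 < (τ - z).im := by rwa [Complex.sub_im, sub_pos]
  refine .of_nat_of_neg_add_one
    (by simpa only [Int.cast_natCast] using hasSum_nat_mon_zero_mul hm hτ hz hg) ?_
  simp only [mon_reflect, mul_left_comm (c _), tsum_mul_left]
  refine (((hasSum_nat_mon_zero_mul hm hτ hz' hg).mul_left _).mul_left ε).congr_fun fun n => ?_
  have hmon := mon_reflect m τ z n 0
  rw [neg_zero] at hmon
  rw [neg_add', hmon, ee_reflect, hg_inv _ (ee_ne_zero _), Int.cast_natCast]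
  ring

theorem hasSum_appell₁_summand (hm : 0 < m) (hz : 0 < z.im) (hzτ : z.im < τ.im) :
    HasSum (fun s : ℤ => ee ((m : ℂ) * (s : ℂ) ^ 2 * τ + 2 * (m : ℂ) * (s : ℂ) * z) *
        (1 + ee ((s : ℂ) * τ + z)) / (1 - ee ((s : ℂ) * τ + z)))
      (2 * ((∑' p : ℕ × ℕ,
          (if p.2 = 0 then (1 / 2 : ℂ) else 1) * mon m τ z (p.1 : ℤ) (p.2 : ℤ)) -
        ∑' p : ℕ × ℕ,
          (if p.2 = 0 then (1 / 2 : ℂ) else 1) * mon m τ z (-(p.1 : ℤ) - 1) (-(p.2 : ℤ)))) := by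
  have h := hasSum_int_mon_zero_mul hm hz hzτ (fun _ => hasSum_geometric_half_zeroth_term)
    fun _ hw => (one_add_inv_div_two_mul_one_sub_inv hw).trans (neg_one_mul _).symm
  rw [neg_one_mul, ← sub_eq_add_neg] at h
  refine (h.mul_left 2).congr_fun fun s => ?_
  rw [mon_zero]
  field

theorem hasSum_appell₂_summand (hm : 0 < m) (hz : 0 < z.im) (hzτ : z.im < τ.im) :
    HasSum (fun s : ℤ =>
        ee (((m : ℂ) * (s : ℂ) ^ 2 + (s : ℂ)) * τ + (2 * (m : ℂ) * (s : ℂ) + 1) * z) /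
          (1 - ee ((s : ℂ) * τ + z)) ^ 2)
      ((∑' p : ℕ × ℕ, (p.2 : ℂ) * mon m τ z (p.1 : ℤ) (p.2 : ℤ)) +
        ∑' p : ℕ × ℕ, (p.2 : ℂ) * mon m τ z (-(p.1 : ℤ) - 1) (-(p.2 : ℤ))) := by
  have h := hasSum_int_mon_zero_mul hm hz hzτ (fun _ => hasSum_coe_mul_geometric_of_norm_lt_one)
    fun _ hw => (inv_div_one_sub_inv_sq hw).trans (one_mul _).symm
  rw [one_mul] at h
  refine h.congr_fun fun s => ?_
  rw [← mul_div_assoc, ← mon_one]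
  simp [mon]

end Expansion

/-- In the range `0 < Im z < Im τ`, the Appell–Lerch sums `A_{1,m}` and `A_{2,m}` have the
Fourier expansions `A_{1,m} = -∑_{s≥0}∑'_{ℓ≥0} q^{ms²+ℓs}y^{2ms+ℓ} + ∑_{s≤-1}∑'_{ℓ≤0} ...`
and `A_{2,m} = ∑_{s≥0}∑_{ℓ≥0} ℓ·q^{ms²+ℓs}y^{2ms+ℓ} - ∑_{s≤-1}∑_{ℓ≤0} ℓ·...`, where `∑'`
counts the `ℓ = 0` term with coefficient `1/2`, and all series converge absolutely. -/
theorem appell_lerch_fourier_expansion (m : ℕ) (hm : 0 < m) (τ z : ℂ)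
    (hτ : 0 < τ.im) (hz0 : 0 < z.im) (hzτ : z.im < τ.im) :
    Summable (fun s : ℤ => ‖ee ((m : ℂ) * (s : ℂ) ^ 2 * τ + 2 * (m : ℂ) * (s : ℂ) * z) *
        (1 + ee ((s : ℂ) * τ + z)) / (1 - ee ((s : ℂ) * τ + z))‖) ∧
    Summable (fun s : ℤ =>
      ‖ee (((m : ℂ) * (s : ℂ) ^ 2 + (s : ℂ)) * τ + (2 * (m : ℂ) * (s : ℂ) + 1) * z) /
        (1 - ee ((s : ℂ) * τ + z)) ^ 2‖) ∧
    Summable (fun p : ℕ × ℕ =>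
      ‖(if p.2 = 0 then (1 / 2 : ℂ) else 1) * mon m τ z (p.1 : ℤ) (p.2 : ℤ)‖) ∧
    Summable (fun p : ℕ × ℕ =>
      ‖(if p.2 = 0 then (1 / 2 : ℂ) else 1) * mon m τ z (-(p.1 : ℤ) - 1) (-(p.2 : ℤ))‖) ∧
    appell₁ m τ z =
      -(∑' p : ℕ × ℕ, (if p.2 = 0 then (1 / 2 : ℂ) else 1) * mon m τ z (p.1 : ℤ) (p.2 : ℤ)) +
        ∑' p : ℕ × ℕ,
          (if p.2 = 0 then (1 / 2 : ℂ) else 1) * mon m τ z (-(p.1 : ℤ) - 1) (-(p.2 : ℤ)) ∧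
    Summable (fun p : ℕ × ℕ => ‖((p.2 : ℤ) : ℂ) * mon m τ z (p.1 : ℤ) (p.2 : ℤ)‖) ∧
    Summable (fun p : ℕ × ℕ =>
      ‖((-(p.2 : ℤ) : ℤ) : ℂ) * mon m τ z (-(p.1 : ℤ) - 1) (-(p.2 : ℤ))‖) ∧
    appell₂ m τ z =
      (∑' p : ℕ × ℕ, ((p.2 : ℤ) : ℂ) * mon m τ z (p.1 : ℤ) (p.2 : ℤ)) -
        ∑' p : ℕ × ℕ, ((-(p.2 : ℤ) : ℤ) : ℂ) * mon m τ z (-(p.1 : ℤ) - 1) (-(p.2 : ℤ)) := by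
  have hy : ‖ee z‖ < 1 := norm_ee_lt_one hz0
  have hy' : ‖ee (τ - z)‖ < 1 := norm_ee_lt_one (by rwa [Complex.sub_im, sub_pos])
  have h₁ := hasSum_appell₁_summand hm hz0 hzτ
  have h₂ := hasSum_appell₂_summand hm hz0 hzτ
  have s₁ := summable_norm_coeff_mul_mon hm hτ
    (hasSum_geometric_half_zeroth_term hy).summable.norm
  have s₁' := summable_norm_coeff_mul_mon_neg hm hτ
    (hasSum_geometric_half_zeroth_term hy').summable.norm
  have s₂ := summable_norm_coeff_mul_mon hm hτ
    (hasSum_coe_mul_geometric_of_norm_lt_one hy).summable.norm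
  have s₂' := summable_norm_coeff_mul_mon_neg hm hτ
    (hasSum_coe_mul_geometric_of_norm_lt_one hy').summable.norm
  simp only [Int.cast_neg, Int.cast_natCast, neg_mul, norm_neg, tsum_neg]
  refine ⟨h₁.summable.norm, h₂.summable.norm, s₁, s₁', ?_, s₂, s₂', ?_⟩
  · rw [appell₁, h₁.tsum_eq]
    ring
  · rw [appell₂, h₂.tsum_eq]
    ring
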